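/- Let k be an algebraically closed field, let A and B be commutative and cocommutative Hopf algebras over k, and let f : A → B be a homomorphism of Hopf algebras over k such that B, regarded as an A-module via f, is faithfully flat. Then every k-algebra homomorphism x : A → k extends along f: there exists a k-algebra homomorphism y : B → k with y ∘ f = x. -/

import Mathlib

open scoped TensorProduct

section TensorSlices

variable {k M N : Type*} [Field k] [AddCommGroup M] [Module k M] [AddCommGroup N] [Module k N]

/-- Contraction of the left tensor factor with a linear functional. -/
noncomputable def sliceLeft (N : Type*) [AddCommGroup N] [Module k N] (φ : M →ₗ[k] k) :
    M ⊗[k] N →ₗ[k] N :=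
  (TensorProduct.lid k N).toLinearMap ∘ₗ φ.rTensor N

/-- Contraction of the right tensor factor with a linear functional. -/
noncomputable def sliceRight (M : Type*) [AddCommGroup M] [Module k M] (φ : N →ₗ[k] k) :
    M ⊗[k] N →ₗ[k] M :=
  (TensorProduct.rid k M).toLinearMap ∘ₗ φ.lTensor M

@[simp]
lemma sliceLeft_tmul (φ : M →ₗ[k] k) (m : M) (n : N) : sliceLeft N φ (m ⊗ₜ n) = φ m • n := by
  simp [sliceLeft]

@[simp]
lemma sliceRight_tmul (φ : N →ₗ[k] k) (m : M) (n : N) : sliceRight M φ (m ⊗ₜ n) = φ n • m := by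
  simp [sliceRight]

lemma exists_dual_frame (L : Submodule k M) [FiniteDimensional k L] :
    ∃ (n : ℕ) (e : Fin n → M) (φ : Fin n → M →ₗ[k] k),
      (∀ i, e i ∈ L) ∧ ∀ x ∈ L, ∑ i, φ i x • e i = x := by
  let b := Module.finBasis k L
  choose φ hφ using fun i ↦ LinearMap.exists_extend (b.coord i)
  refine ⟨_, fun i ↦ (b i : M), φ, fun i ↦ (b i).2, fun x hx ↦ ?_⟩
  have h : ∀ i, φ i x = b.repr ⟨x, hx⟩ i := fun i ↦ congr($(hφ i) ⟨x, hx⟩)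
  have := congrArg L.subtype (b.sum_repr ⟨x, hx⟩)
  rw [map_sum] at this
  simpa only [h, map_smul, Submodule.subtype_apply] using this

lemma sum_tmul_sliceLeft {ι : Type*} [Fintype ι] {L : Submodule k M} {e : ι → M}
    {φ : ι → M →ₗ[k] k} (h : ∀ x ∈ L, ∑ i, φ i x • e i = x) {t : M ⊗[k] N}
    (ht : t ∈ LinearMap.range (L.subtype.rTensor N)) :
    ∑ i, e i ⊗ₜ[k] sliceLeft N (φ i) t = t := by
  obtain ⟨t, rfl⟩ := ht
  induction t with
  | zero => simp
  | add x y hx hy => simp only [map_add, TensorProduct.tmul_add, Finset.sum_add_distrib, hx, hy]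
  | tmul x y =>
    simp [TensorProduct.tmul_smul, TensorProduct.smul_tmul', ← TensorProduct.sum_tmul, h x x.2]

lemma sum_sliceRight_tmul {ι : Type*} [Fintype ι] {L : Submodule k N} {e : ι → N}
    {φ : ι → N →ₗ[k] k} (h : ∀ x ∈ L, ∑ i, φ i x • e i = x) {t : M ⊗[k] N}
    (ht : t ∈ LinearMap.range (L.subtype.lTensor M)) :
    ∑ i, sliceRight M (φ i) t ⊗ₜ[k] e i = t := by
  obtain ⟨t, rfl⟩ := ht
  induction t with
  | zero => simp
  | add x y hx hy => simp only [map_add, TensorProduct.add_tmul, Finset.sum_add_distrib, hx, hy]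
  | tmul x y =>
    simp only [LinearMap.lTensor_tmul, sliceRight_tmul, TensorProduct.smul_tmul,
      ← TensorProduct.tmul_sum, Submodule.subtype_apply, h y y.2]

end TensorSlices

section FiniteSubcoalgebra

open Coalgebra

variable {k B : Type*} [Field k] [AddCommGroup B] [Module k B]

lemma sliceLeft_assoc_tmul (φ : B →ₗ[k] k) (t : B ⊗[k] B) (c : B) :
    sliceLeft (B ⊗[k] B) φ (TensorProduct.assoc k B B B (t ⊗ₜ c)) = sliceLeft B φ t ⊗ₜ c := by
  induction t with
  | zero => simp
  | add x y hx hy => simp only [map_add, TensorProduct.add_tmul, hx, hy]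
  | tmul x y => simp [TensorProduct.smul_tmul']

lemma sliceRight_assoc_symm_tmul (φ : B →ₗ[k] k) (c : B) (t : B ⊗[k] B) :
    sliceRight (B ⊗[k] B) φ ((TensorProduct.assoc k B B B).symm (c ⊗ₜ t)) =
      c ⊗ₜ sliceRight B φ t := by
  induction t with
  | zero => simp
  | add x y hx hy => simp only [map_add, TensorProduct.tmul_add, hx, hy]
  | tmul x y => simp

variable [Coalgebra k B]

lemma comul_sliceLeft (φ : B →ₗ[k] k) (t : B ⊗[k] B) :
    comul (R := k) (sliceLeft B φ t) = sliceLeft (B ⊗[k] B) φ (comul.lTensor B t) := by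
  induction t with
  | zero => simp
  | add x y hx hy => simp only [map_add, hx, hy]
  | tmul x y => simp

lemma comul_sliceRight (φ : B →ₗ[k] k) (t : B ⊗[k] B) :
    comul (R := k) (sliceRight B φ t) = sliceRight (B ⊗[k] B) φ (comul.rTensor B t) := by
  induction t with
  | zero => simp
  | add x y hx hy => simp only [map_add, hx, hy]
  | tmul x y => simp

lemma sliceLeft_counit_comul (b : B) : sliceLeft B (counit (R := k)) (comul b) = b := by
  simp [sliceLeft]

lemma sliceRight_counit_comul (b : B) : sliceRight B (counit (R := k)) (comul b) = b := by
  simp [sliceRight]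

/-- Every element lies in a finite-dimensional left subcomodule. -/
lemma exists_finite_subcomodule (b : B) :
    ∃ L : Submodule k B, FiniteDimensional k L ∧ b ∈ L ∧
      ∀ x ∈ L, comul (R := k) x ∈ LinearMap.range (L.subtype.lTensor B) := by
  obtain ⟨L₀, hL₀, hb⟩ :=
    TensorProduct.exists_finite_submodule_left_of_setFinite {comul (R := k) b}
      (Set.finite_singleton _)
  obtain ⟨n, e, φ, -, h⟩ := exists_dual_frame L₀
  have hΔ := sum_tmul_sliceLeft h (hb rfl)
  set β : Fin n → B := fun i ↦ sliceLeft B (φ i) (comul (R := k) b) with hβ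
  refine ⟨Submodule.span k (Set.range β), .span_of_finite k (Set.finite_range β), ?_, ?_⟩
  · have := congrArg (sliceLeft B counit) hΔ
    simp only [map_sum, sliceLeft_tmul, sliceLeft_counit_comul] at this
    rw [← this]
    exact Submodule.sum_mem _ fun i _ ↦
      Submodule.smul_mem _ _ (Submodule.subset_span (Set.mem_range_self i))
  · intro x hx
    induction hx using Submodule.span_induction with
    | zero => simp
    | add x y _ _ hx hy => rw [map_add]; exact add_mem hx hy
    | smul a x _ hx => rw [map_smul]; exact Submodule.smul_mem _ _ hx
    | mem x hx =>
      obtain ⟨i, rfl⟩ := hx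
      have key : comul (R := k) (β i) = ∑ j, sliceLeft B (φ i) (comul (R := k) (e j)) ⊗ₜ β j := by
        rw [hβ, comul_sliceLeft, ← coassoc_apply]
        conv_lhs => rw [← hΔ]
        simp [sliceLeft_assoc_tmul]
      rw [key]
      refine Submodule.sum_mem _ fun j _ ↦
        ⟨sliceLeft B (φ i) (comul (R := k) (e j)) ⊗ₜ
          ⟨β j, Submodule.subset_span ⟨j, rfl⟩⟩, ?_⟩
      rw [LinearMap.lTensor_tmul]
      rfl

/-- Every element lies in the span of a finite comultiplicative matrix. -/
lemma exists_comultiplicative_matrix (b : B) :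
    ∃ (n : ℕ) (d : Fin n → Fin n → B),
      (∀ i j, comul (R := k) (d i j) = ∑ l, d l j ⊗ₜ d i l) ∧
      b ∈ Submodule.span k (Set.range fun p : Fin n × Fin n ↦ d p.1 p.2) := by
  obtain ⟨L, hL, hb, hΔL⟩ := exists_finite_subcomodule (k := k) b
  obtain ⟨n, e, φ, he, h⟩ := exists_dual_frame L
  have hΔ x (hx : x ∈ L) := sum_sliceRight_tmul h (hΔL x hx)
  refine ⟨n, fun i j ↦ sliceRight B (φ i) (comul (R := k) (e j)), fun i j ↦ ?_, ?_⟩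
  · rw [comul_sliceRight, ← coassoc_symm_apply]
    conv_lhs => rw [← hΔ _ (he j)]
    simp [sliceRight_assoc_symm_tmul]
  · rw [← h b hb]
    refine Submodule.sum_mem _ fun j _ ↦ Submodule.smul_mem _ _ ?_
    have := congrArg (sliceRight B counit) (hΔ _ (he j))
    simp only [map_sum, sliceRight_tmul, sliceRight_counit_comul] at this
    rw [← this]
    exact Submodule.sum_mem _ fun i _ ↦
      Submodule.smul_mem _ _ (Submodule.subset_span ⟨(i, j), rfl⟩)

end FiniteSubcoalgebra

lemma exists_notMem_isNilpotent_mul {R : Type*} [CommRing R] {p : Ideal R}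
    (hp : p ∈ minimalPrimes R) {x : R} (hx : x ∈ p) : ∃ t ∉ p, IsNilpotent (x * t) := by
  have hpr : p.IsPrime := hp.1.1
  by_cases h : (0 : R) ∈ Submonoid.powers x ⊔ p.primeCompl
  · obtain ⟨_, ⟨n, rfl⟩, t, ht, hxt⟩ := Submonoid.mem_sup.1 h
    refine ⟨t, ht, n + 1, ?_⟩
    calc (x * t) ^ (n + 1) = x ^ n * t * (x * t ^ n) := by ring
      _ = 0 := by rw [show x ^ n * t = 0 from hxt, zero_mul]
  · obtain ⟨q, hq, -, hdis⟩ := Ideal.exists_le_prime_disjoint (⊥ : Ideal R)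
      (Submonoid.powers x ⊔ p.primeCompl)
      (Set.disjoint_left.2 fun y hy hy' ↦ h ((Ideal.mem_bot.1 hy) ▸ hy'))
    rw [Set.disjoint_left] at hdis
    have hqp : q ≤ p := fun y hy ↦ by
      by_contra hyp
      exact hdis hy (Submonoid.mem_sup_right (S := Submonoid.powers x) (T := p.primeCompl) hyp)
    exact absurd (Submonoid.mem_sup_left (Submonoid.mem_powers x))
      (hdis (hp.2 ⟨hq, bot_le⟩ hqp hx))

section Points

variable {k : Type*} [Field k] [IsAlgClosed k]

lemma nonempty_algHom_of_finiteType (R : Type*) [CommRing R] [Nontrivial R] [Algebra k R]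
    [Algebra.FiniteType k R] : Nonempty (R →ₐ[k] k) := by
  obtain ⟨m, hm⟩ := Ideal.exists_maximal R
  let _ := Ideal.Quotient.field m
  have : Algebra.FiniteType k (R ⧸ m) :=
    .of_surjective (Ideal.Quotient.mkₐ k m) (Ideal.Quotient.mkₐ_surjective k m)
  have : Module.Finite k (R ⧸ m) := finite_of_finite_type_of_isJacobsonRing k (R ⧸ m)
  have h : Function.Bijective (algebraMap k (R ⧸ m)) :=
    IsAlgClosed.algebraMap_bijective_of_isIntegral
  exact ⟨((AlgEquiv.ofBijective (Algebra.ofId k (R ⧸ m)) h).symm : (R ⧸ m) →ₐ[k] k).comp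
    (Ideal.Quotient.mkₐ k m)⟩

lemma exists_algHom_apply_ne_zero {R : Type*} [CommRing R] [Algebra k R]
    [Algebra.FiniteType k R] {s : R} (hs : ¬ IsNilpotent s) : ∃ u : R →ₐ[k] k, u s ≠ 0 := by
  have : Nontrivial (Localization.Away s) := by
    rw [← not_subsingleton_iff_nontrivial]
    rwa [IsLocalization.subsingleton_iff (M := .powers s)]
  have : Algebra.FiniteType k (Localization.Away s) :=
    .trans (S := R) inferInstance (IsLocalization.finiteType_of_monoid_fg (.powers s) _)
  obtain ⟨u⟩ := nonempty_algHom_of_finiteType (k := k) (Localization.Away s)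
  refine ⟨u.comp (IsScalarTower.toAlgHom k R _), ?_⟩
  exact ((IsLocalization.Away.algebraMap_isUnit s).map u).ne_zero

lemma exists_algHom_comp_eq_of_map_ker_ne_top {R S : Type*} [CommRing R] [CommRing S]
    [Algebra k R] [Algebra k S] [Algebra.FiniteType k S] (f : R →ₐ[k] S) (z : R →ₐ[k] k)
    (h : (RingHom.ker z).map f ≠ ⊤) : ∃ y : S →ₐ[k] k, y.comp f = z := by
  have := Ideal.Quotient.nontrivial_iff.2 h
  have : Algebra.FiniteType k (S ⧸ (RingHom.ker z).map f) :=
    .of_surjective (Ideal.Quotient.mkₐ k _) (Ideal.Quotient.mkₐ_surjective k _)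
  obtain ⟨u⟩ := nonempty_algHom_of_finiteType (k := k) (S ⧸ (RingHom.ker z).map f)
  refine ⟨u.comp (Ideal.Quotient.mkₐ k _), AlgHom.ext fun c ↦ ?_⟩
  have hc : f (c - algebraMap k R (z c)) ∈ (RingHom.ker z).map f :=
    Ideal.mem_map_of_mem f (by simp [RingHom.mem_ker])
  have := congrArg u (Ideal.Quotient.eq_zero_iff_mem.2 hc)
  rw [← Ideal.Quotient.mkₐ_eq_mk k, ← AlgHom.comp_apply, map_sub, map_sub, map_zero,
    sub_eq_zero] at this
  simpa using this

/-- The image on `k`-points of an injection of finitely generated algebras contains a nonempty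
principal open set. -/
lemma exists_not_isNilpotent_forall_lift {R S : Type*} [CommRing R] [CommRing S] [Nontrivial R]
    [Algebra k R] [Algebra k S] [Algebra.FiniteType k R] [Algebra.FiniteType k S]
    (f : R →ₐ[k] S) (hf : Function.Injective f) :
    ∃ s : R, ¬ IsNilpotent s ∧
      ∀ u : R →ₐ[k] k, u s ≠ 0 → ∃ v : S →ₐ[k] k, v.comp f = u := by
  have : IsNoetherianRing R := Algebra.FiniteType.isNoetherianRing k R
  have hft : (f : R →+* S).FiniteType := by
    refine RingHom.FiniteType.of_comp_finiteType (f := algebraMap k R) ?_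
    rw [AlgHom.comp_algebraMap]
    exact (RingHom.finiteType_algebraMap ..).2 inferInstance
  have hfp := RingHom.FinitePresentation.of_finiteType.1 hft
  obtain ⟨p, hp⟩ := Ideal.nonempty_minimalPrimes (bot_ne_top (α := Ideal R))
  obtain ⟨q, hq, hqp⟩ :=
    Ideal.exists_comap_eq_of_mem_minimalPrimes_of_injective (f := (f : R →+* S)) hf p hp
  obtain ⟨T, hT⟩ := PrimeSpectrum.exists_constructibleSetData_iff.2
    (PrimeSpectrum.isConstructible_range_comap hfp)
  have hpr : p.IsPrime := hp.1.1
  have hmem : (⟨p, hpr⟩ : PrimeSpectrum R) ∈ T.toSet := by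
    rw [hT]
    exact ⟨⟨q, hq⟩, PrimeSpectrum.ext hqp⟩
  simp only [PrimeSpectrum.ConstructibleSetData.toSet, Set.mem_iUnion] at hmem
  obtain ⟨c, hcT, hcg, hcf⟩ := hmem
  have hg (i) : c.g i ∈ p := hcg ⟨i, rfl⟩
  choose t ht htn using fun i ↦ exists_notMem_isNilpotent_mul hp (hg i)
  refine ⟨c.f * ∏ i, t i, fun hn ↦ ?_, fun u hu ↦ ?_⟩
  · have := nilpotent_iff_mem_prime.1 hn p hpr
    rcases hpr.mem_or_mem this with h | h
    · exact hcf (by simpa using h)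
    · obtain ⟨i, -, hi⟩ := (hpr.prod_mem_iff).1 h
      exact ht i hi
  · have hu' : u c.f ≠ 0 ∧ ∀ i, u (t i) ≠ 0 := by
      simpa [Finset.prod_eq_zero_iff] using hu
    have hur : (RingHom.ker u).IsPrime := RingHom.ker_isPrime u
    have : (⟨RingHom.ker u, hur⟩ : PrimeSpectrum R) ∈ T.toSet := by
      simp only [PrimeSpectrum.ConstructibleSetData.toSet, Set.mem_iUnion]
      refine ⟨c, hcT, ?_, fun h ↦ hu'.1 (by simpa [RingHom.mem_ker] using h)⟩
      rintro _ ⟨i, rfl⟩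
      have := ((htn i).map u).eq_zero
      rw [map_mul] at this
      exact (mul_eq_zero.1 this).resolve_right (hu'.2 i)
    rw [hT] at this
    obtain ⟨Q, hQ⟩ := this
    refine exists_algHom_comp_eq_of_map_ker_ne_top f u fun htop ↦ Q.2.ne_top ?_
    rw [eq_top_iff, ← htop, Ideal.map_le_iff_le_comap]
    exact (congrArg PrimeSpectrum.asIdeal hQ).ge

end Points

universe u

section HopfSubalgebra

open Coalgebra HopfAlgebra

variable {k : Type*} [Field k]

/-- If `g` is an injective homomorphism of bialgebras then homomorphisms of bialgebras with values
in its range factor through it. -/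
lemma BialgHom.exists_comp_eq_of_injective {E X B : Type*} [CommRing E] [CommRing X] [CommRing B]
    [Bialgebra k E] [Bialgebra k X] [Bialgebra k B] (g : E →ₐc[k] B) (hg : Function.Injective g)
    (h : X →ₐc[k] B) (hr : ∀ x, ∃ y, g y = h x) : ∃ h' : X →ₐc[k] E, ∀ x, g (h' x) = h x := by
  let e := AlgEquiv.ofInjective (g : E →ₐ[k] B) hg
  let φ : X →ₐ[k] E :=
    (e.symm : (g : E →ₐ[k] B).range →ₐ[k] E).comp ((h : X →ₐ[k] B).codRestrict _ hr)
  have hφ (x) : g (φ x) = h x := congrArg Subtype.val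
    (e.apply_symm_apply (((h : X →ₐ[k] B).codRestrict (g : E →ₐ[k] B).range hr) x))
  have hinj : Function.Injective (TensorProduct.map g.toLinearMap g.toLinearMap) :=
    TensorProduct.map_injective_of_flat_flat _ _ hg hg
  refine ⟨.ofAlgHom φ (AlgHom.ext fun x ↦ ?_) (AlgHom.ext fun x ↦ hinj ?_), hφ⟩
  · have := congrArg (counit (R := k)) (hφ x)
    simpa using this
  · have h1 : (TensorProduct.map g.toLinearMap g.toLinearMap) ∘ₗ
        (TensorProduct.map φ.toLinearMap φ.toLinearMap) =
        TensorProduct.map h.toLinearMap h.toLinearMap := by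
      rw [← TensorProduct.map_comp]
      congr 1 <;> exact LinearMap.ext hφ
    have h2 := CoalgHomClass.map_comp_comul_apply h x
    have h3 := CoalgHomClass.map_comp_comul_apply g (φ x)
    rw [hφ, ← h2] at h3
    exact congr($h1 (comul x)).trans h3.symm

/-- A subalgebra of a Hopf algebra stable under comultiplication and antipode. -/
structure IsHopfSubalgebra {B : Type*} [CommRing B] [HopfAlgebra k B] (S : Subalgebra k B) :
    Prop where
  comul_mem : S ≤ (Algebra.TensorProduct.map S.val S.val).range.comap (Bialgebra.comulAlgHom k B)
  antipode_mem : S ≤ S.comap (antipodeAlgHom k B)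

variable {B : Type*} [CommRing B] [HopfAlgebra k B]

lemma comul_antipode_eq (b : B) :
    comul (R := k) (antipode k b) =
      TensorProduct.map (antipode k) (antipode k) (TensorProduct.comm k B B (comul b)) := by
  let i₁ := WithConv.toConv (Algebra.TensorProduct.includeLeft : B →ₐ[k] B ⊗[k] B)
  let i₂ := WithConv.toConv (Algebra.TensorProduct.includeRight : B →ₐ[k] B ⊗[k] B)
  have hmul : WithConv.toConv (Bialgebra.comulAlgHom k B) = i₁ * i₂ := by
    have : (Algebra.TensorProduct.lmul' k).comp
        (Algebra.TensorProduct.map i₁.ofConv i₂.ofConv) = AlgHom.id k (B ⊗[k] B) := by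
      ext <;> simp [i₁, i₂]
    rw [AlgHom.convMul_def, ← AlgHom.comp_assoc, this, AlgHom.id_comp]
  have hinv : (WithConv.toConv (Bialgebra.comulAlgHom k B))⁻¹ = i₂⁻¹ * i₁⁻¹ :=
    (congrArg (·⁻¹) hmul).trans (mul_inv_rev i₁ i₂)
  have h := congr(($hinv).ofConv b)
  refine h.trans ?_
  rw [AlgHom.convMul_def]
  change Algebra.TensorProduct.lmul' k (Algebra.TensorProduct.map (i₂⁻¹).ofConv (i₁⁻¹).ofConv
    (comul b)) = _
  induction comul (R := k) b with
  | zero => simp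
  | add x y hx hy => simp only [map_add, hx, hy]
  | tmul x y =>
    change ((1 : B) ⊗ₜ[k] antipode k x) * (antipode k y ⊗ₜ[k] (1 : B)) = _
    simp

lemma antipode_antipode (b : B) : antipode k (antipode k b) = b := by
  have h := inv_inv (WithConv.toConv (AlgHom.id k B))
  exact congr(($h).ofConv b)

lemma BialgHom.map_antipode {A : Type*} [CommRing A] [HopfAlgebra k A] (f : A →ₐc[k] B) (a : A) :
    f (antipode k a) = antipode k (f a) := by
  have h1 := inv_mul_cancel (WithConv.toConv (f : A →ₐ[k] B))
  have h2 := AlgHom.convMul_comp_bialgHom_distrib (WithConv.toConv (antipodeAlgHom k B))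
    (WithConv.toConv (AlgHom.id k B)) f
  rw [AlgHom.antipode_id_cancel] at h2
  have h3 : (1 : WithConv (B →ₐ[k] B)).ofConv.comp (f : A →ₐ[k] B) =
      (1 : WithConv (A →ₐ[k] B)).ofConv := by
    ext a
    simp [AlgHom.convOne_def]
  have h4 : WithConv.toConv ((antipodeAlgHom k B).comp (f : A →ₐ[k] B)) *
      WithConv.toConv (f : A →ₐ[k] B) = 1 :=
    WithConv.ofConv_injective (h2.symm.trans h3)
  have h5 := mul_right_cancel (h1.trans h4.symm)
  exact congr(($h5).ofConv a)

namespace IsHopfSubalgebra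

lemma tmul_mem {S : Subalgebra k B} {a b : B} (ha : a ∈ S) (hb : b ∈ S) :
    a ⊗ₜ[k] b ∈ (Algebra.TensorProduct.map S.val S.val).range :=
  ⟨⟨a, ha⟩ ⊗ₜ ⟨b, hb⟩, by simp⟩

lemma range_map_mono {S T : Subalgebra k B} (h : S ≤ T) :
    (Algebra.TensorProduct.map S.val S.val).range ≤
      (Algebra.TensorProduct.map T.val T.val).range := by
  rintro _ ⟨t, rfl⟩
  induction t with
  | zero => simp
  | add x y hx hy => rw [map_add]; exact add_mem hx hy
  | tmul x y => exact tmul_mem (h x.2) (h y.2)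

lemma bot : IsHopfSubalgebra (⊥ : Subalgebra k B) := ⟨bot_le, bot_le⟩

lemma sup {S T : Subalgebra k B} (hS : IsHopfSubalgebra S) (hT : IsHopfSubalgebra T) :
    IsHopfSubalgebra (S ⊔ T) where
  comul_mem := sup_le
    (hS.comul_mem.trans ((Subalgebra.gc_map_comap _).monotone_u (range_map_mono le_sup_left)))
    (hT.comul_mem.trans ((Subalgebra.gc_map_comap _).monotone_u (range_map_mono le_sup_right)))
  antipode_mem := sup_le
    (hS.antipode_mem.trans ((Subalgebra.gc_map_comap _).monotone_u le_sup_left))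
    (hT.antipode_mem.trans ((Subalgebra.gc_map_comap _).monotone_u le_sup_right))

lemma iSup {ι : Sort*} {S : ι → Subalgebra k B} (hS : ∀ i, IsHopfSubalgebra (S i)) :
    IsHopfSubalgebra (⨆ i, S i) where
  comul_mem := iSup_le fun i ↦
    (hS i).comul_mem.trans ((Subalgebra.gc_map_comap _).monotone_u (range_map_mono (le_iSup S i)))
  antipode_mem := iSup_le fun i ↦
    (hS i).antipode_mem.trans ((Subalgebra.gc_map_comap _).monotone_u (le_iSup S i))

lemma range {A : Type*} [CommRing A] [HopfAlgebra k A] (f : A →ₐc[k] B) :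
    IsHopfSubalgebra (f : A →ₐ[k] B).range where
  comul_mem := by
    rintro _ ⟨a, rfl⟩
    change comul (R := k) (f a) ∈ (Algebra.TensorProduct.map _ _).range
    rw [← CoalgHomClass.map_comp_comul_apply]
    induction comul (R := k) a with
    | zero => simp
    | add x y hx hy => rw [map_add]; exact add_mem hx hy
    | tmul x y => exact tmul_mem ⟨x, rfl⟩ ⟨y, rfl⟩
  antipode_mem := by
    rintro _ ⟨a, rfl⟩
    exact ⟨antipode k a, BialgHom.map_antipode f a⟩

/-- A Hopf subalgebra is the range of an injective homomorphism of Hopf algebras. -/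
lemma exists_injective_range_eq {B : Type u} [CommRing B] [HopfAlgebra k B]
    {S : Subalgebra k B} (hS : IsHopfSubalgebra S) :
    ∃ (E : Type u) (_ : CommRing E) (_ : HopfAlgebra k E) (g : E →ₐc[k] B),
      Function.Injective g ∧ (g : E →ₐ[k] B).range = S := by
  let ι := Algebra.TensorProduct.map S.val S.val
  have hv : Function.Injective S.val.toLinearMap := Subtype.val_injective
  have hι : Function.Injective ι := TensorProduct.map_injective_of_flat_flat _ _ hv hv
  let e := AlgEquiv.ofInjective ι hι
  let δ : S →ₐ[k] S ⊗[k] S := (e.symm : ι.range →ₐ[k] S ⊗[k] S).comp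
    (((Bialgebra.comulAlgHom k B).comp S.val).codRestrict ι.range fun x ↦ hS.comul_mem x.2)
  have hδ : ι.comp δ = (Bialgebra.comulAlgHom k B).comp S.val :=
    AlgHom.ext fun x ↦ congrArg Subtype.val (e.apply_symm_apply _)
  let ε : S →ₐ[k] k := (Bialgebra.counitAlgHom k B).comp S.val
  let σ : S →ₐ[k] S :=
    ((antipodeAlgHom k B).comp S.val).codRestrict S fun x ↦ hS.antipode_mem x.2
  have hσ (x : S) : (σ x : B) = antipode k (x : B) := rfl
  let _ : Bialgebra k S := Bialgebra.ofAlgHom δ ε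
    (by
      have hJ : Function.Injective (Algebra.TensorProduct.map S.val ι) :=
        TensorProduct.map_injective_of_flat_flat _ ι.toLinearMap hv hι
      have h1 : (Algebra.TensorProduct.map S.val ι).comp
          (Algebra.TensorProduct.assoc k k k S S S).toAlgHom =
          (Algebra.TensorProduct.assoc k k k B B B).toAlgHom.comp
            (Algebra.TensorProduct.map ι S.val) := by
        ext <;> simp [ι, Algebra.TensorProduct.one_def]
      refine AlgHom.ext fun x ↦ hJ ?_
      have h2 := coassoc_apply (R := k) (x : B)
      have h3 : comul (R := k) (x : B) = ι (δ x) := congr($hδ x).symm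
      rw [h3] at h2
      refine (congr($h1 (Algebra.TensorProduct.map δ (.id k S) (δ x)))).trans
        (Eq.trans ?_ (h2.trans ?_))
      · refine congrArg (TensorProduct.assoc k B B B) ?_
        induction δ x with
        | zero => simp
        | add x y hx hy => simp only [map_add, hx, hy]
        | tmul x y => exact congr($hδ x ⊗ₜ[k] (y : B))
      · change _ = Algebra.TensorProduct.map S.val ι (Algebra.TensorProduct.map (.id k S) δ (δ x))
        induction δ x with
        | zero => simp
        | add x y hx hy => simp only [map_add, hx, hy]
        | tmul x y => exact congr((x : B) ⊗ₜ[k] $hδ y).symm)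
    (by
      refine AlgHom.ext fun x ↦ (TensorProduct.lid k S).injective (Subtype.val_injective ?_)
      have h2 := rTensor_counit_comul (R := k) (x : B)
      have h3 : comul (R := k) (x : B) = ι (δ x) := congr($hδ x).symm
      rw [h3] at h2
      have h4 := congrArg (TensorProduct.lid k B) h2
      refine Eq.trans ?_ (h4.trans (by simp))
      change ((TensorProduct.lid k S (Algebra.TensorProduct.map ε (.id k S) (δ x)) : S) : B) = _
      induction δ x with
      | zero => simp
      | add x y hx hy => simp only [map_add, Subalgebra.coe_add, hx, hy]
      | tmul x y => simp [ι, ε])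
    (by
      refine AlgHom.ext fun x ↦ (TensorProduct.rid k S).injective (Subtype.val_injective ?_)
      have h2 := lTensor_counit_comul (R := k) (x : B)
      have h3 : comul (R := k) (x : B) = ι (δ x) := congr($hδ x).symm
      rw [h3] at h2
      have h4 := congrArg (TensorProduct.rid k B) h2
      refine Eq.trans ?_ (h4.trans (by simp))
      change ((TensorProduct.rid k S (Algebra.TensorProduct.map (.id k S) ε (δ x)) : S) : B) = _
      induction δ x with
      | zero => simp
      | add x y hx hy => simp only [map_add, Subalgebra.coe_add, hx, hy]
      | tmul x y => simp [ι, ε])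
  have hcomul (x : S) : TensorProduct.map S.val.toLinearMap S.val.toLinearMap (comul x) =
      comul (R := k) (x : B) := congr($hδ x)
  have hcounit (x : S) : counit (R := k) x = counit (R := k) (x : B) := rfl
  let _ : HopfAlgebra k S :=
    { antipode := σ.toLinearMap
      mul_antipode_rTensor_comul := by
        ext x
        have := mul_antipode_rTensor_comul_apply (R := k) (x : B)
        rw [← hcomul] at this
        refine Eq.trans ?_ this
        rw [LinearMap.comp_apply, LinearMap.comp_apply]
        induction comul (R := k) x with
        | zero => simp
        | add x y hx hy => simp only [map_add, Subalgebra.coe_add, hx, hy]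
        | tmul x y => simp [hσ]
      mul_antipode_lTensor_comul := by
        ext x
        have := mul_antipode_lTensor_comul_apply (R := k) (x : B)
        rw [← hcomul] at this
        refine Eq.trans ?_ this
        rw [LinearMap.comp_apply, LinearMap.comp_apply]
        induction comul (R := k) x with
        | zero => simp
        | add x y hx hy => simp only [map_add, Subalgebra.coe_add, hx, hy]
        | tmul x y => simp [hσ] }
  refine ⟨S, inferInstance, inferInstance, .ofAlgHom S.val rfl ?_, Subtype.val_injective, ?_⟩
  · exact hδ
  · exact S.range_val

lemma exists_fg_mem (b : B) : ∃ S : Subalgebra k B, IsHopfSubalgebra S ∧ S.FG ∧ b ∈ S := by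
  obtain ⟨n, d, hd, hb⟩ := exists_comultiplicative_matrix (k := k) b
  let W : Set B := Set.range fun p : Fin n × Fin n ↦ d p.1 p.2
  let S := Algebra.adjoin k (W ∪ antipode k '' W)
  have hW (i j) : d i j ∈ S := Algebra.subset_adjoin (.inl ⟨(i, j), rfl⟩)
  have hW' (i j) : antipode k (d i j) ∈ S :=
    Algebra.subset_adjoin (.inr ⟨_, ⟨(i, j), rfl⟩, rfl⟩)
  refine ⟨S, ⟨Algebra.adjoin_le ?_, Algebra.adjoin_le ?_⟩, ?_, ?_⟩
  · rintro _ (⟨⟨i, j⟩, rfl⟩ | ⟨_, ⟨⟨i, j⟩, rfl⟩, rfl⟩)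
    · change comul (R := k) (d i j) ∈ (Algebra.TensorProduct.map S.val S.val).range
      rw [hd]
      exact sum_mem fun l _ ↦ tmul_mem (hW _ _) (hW _ _)
    · change comul (R := k) (antipode k (d i j)) ∈ (Algebra.TensorProduct.map S.val S.val).range
      rw [comul_antipode_eq, hd]
      simp only [map_sum, TensorProduct.comm_tmul, TensorProduct.map_tmul]
      exact sum_mem fun l _ ↦ tmul_mem (hW' _ _) (hW' _ _)
  · rintro _ (⟨⟨i, j⟩, rfl⟩ | ⟨_, ⟨⟨i, j⟩, rfl⟩, rfl⟩)
    · exact hW' i j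
    · change antipode k (antipode k (d i j)) ∈ S
      rw [antipode_antipode]
      exact hW i j
  · exact Subalgebra.fg_def.2
      ⟨_, (Set.finite_range _).union ((Set.finite_range _).image _), rfl⟩
  · exact (Submodule.span_le (p := S.toSubmodule)).2
      (Set.subset_union_left.trans Algebra.subset_adjoin) hb

lemma exists_fg_subset (s : Finset B) :
    ∃ S : Subalgebra k B, IsHopfSubalgebra S ∧ S.FG ∧ ∀ b ∈ s, b ∈ S := by
  classical
  induction s using Finset.induction_on with
  | empty => exact ⟨⊥, bot, Subalgebra.fg_bot, by simp⟩
  | insert a s _ ih =>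
    obtain ⟨S, hS, hfg, hs⟩ := ih
    obtain ⟨T, hT, hTfg, ha⟩ := exists_fg_mem (k := k) a
    refine ⟨T ⊔ S, hT.sup hS, hTfg.sup hfg, fun b hb ↦ ?_⟩
    rcases Finset.mem_insert.1 hb with rfl | hb
    · exact (le_sup_left : T ≤ T ⊔ S) ha
    · exact (le_sup_right : S ≤ T ⊔ S) (hs b hb)

end IsHopfSubalgebra

end HopfSubalgebra

section Extension

variable {k : Type*} [Field k] [IsAlgClosed k]

/-- An injective homomorphism of finitely generated commutative Hopf algebras over an algebraically
closed field induces a surjection on `k`-points. -/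
lemma exists_comp_eq_of_finiteType {E D : Type*} [CommRing E] [CommRing D] [HopfAlgebra k E]
    [HopfAlgebra k D] [Algebra.FiniteType k E] [Algebra.FiniteType k D] (f : E →ₐc[k] D)
    (hf : Function.Injective f) (z : E →ₐ[k] k) :
    ∃ y : D →ₐ[k] k, y.comp (f : E →ₐ[k] D) = z := by
  have : Nontrivial E := z.toRingHom.domain_nontrivial
  obtain ⟨s, hs, hlift⟩ := exists_not_isNilpotent_forall_lift (f : E →ₐ[k] D) hf
  let pull (g : WithConv (D →ₐ[k] k)) : WithConv (E →ₐ[k] k) :=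
    WithConv.toConv (g.ofConv.comp (f : E →ₐ[k] D))
  have pull_mul (g h) : pull (g * h) = pull g * pull h :=
    WithConv.ofConv_injective (AlgHom.convMul_comp_bialgHom_distrib g h f)
  let ζ := WithConv.toConv z
  -- translation by `z`
  let τ : E →ₐ[k] E := (Algebra.TensorProduct.lmul' k).comp
    ((Algebra.TensorProduct.map ((Algebra.ofId k E).comp z) (.id k E)).comp
      (Bialgebra.comulAlgHom k E))
  have hτ (u : WithConv (E →ₐ[k] k)) (a : E) : u.ofConv (τ a) = (ζ * u).ofConv a := by
    change u.ofConv (Algebra.TensorProduct.lmul' k (Algebra.TensorProduct.map _ _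
      (Coalgebra.comul a))) = Algebra.TensorProduct.lmul' k (Algebra.TensorProduct.map z u.ofConv
      (Coalgebra.comul a))
    induction Coalgebra.comul (R := k) a with
    | zero => simp
    | add x y hx hy => simp only [map_add, hx, hy]
    | tmul x y => simp [Algebra.ofId_apply]
  have hτs : ¬ IsNilpotent (f (τ s)) := by
    rw [IsNilpotent.map_iff (f := f) hf]
    intro hn
    obtain ⟨v, hv⟩ := exists_algHom_apply_ne_zero (k := k) hs
    refine hv ?_
    have := hτ (ζ⁻¹ * WithConv.toConv v) s
    rw [mul_inv_cancel_left] at this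
    exact this.symm.trans (hn.map (ζ⁻¹ * WithConv.toConv v).ofConv).eq_zero
  obtain ⟨g, hg⟩ := exists_algHom_apply_ne_zero (k := k) hτs
  let γ := WithConv.toConv g
  obtain ⟨h, hh⟩ := hlift (ζ * pull γ).ofConv (by rw [← hτ]; exact hg)
  have hh' : pull (WithConv.toConv h) = ζ * pull γ := WithConv.ofConv_injective hh
  have hpull : pull (WithConv.toConv h * γ⁻¹) = ζ := by
    apply mul_right_cancel (b := pull γ)
    rw [← pull_mul, inv_mul_cancel_right, hh']
  exact ⟨_, congrArg WithConv.ofConv hpull⟩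

/-- The fibre of an injective homomorphism of commutative Hopf algebras at a `k`-point is
nonempty. -/
lemma map_ker_ne_top_of_injective {C B : Type*} [CommRing C] [CommRing B] [HopfAlgebra k C]
    [HopfAlgebra k B] (f : C →ₐc[k] B) (hf : Function.Injective f) (z : C →ₐ[k] k) :
    (RingHom.ker z).map f ≠ ⊤ := by
  classical
  intro htop
  have h1 : (1 : B) ∈ Ideal.span (f '' (RingHom.ker z : Set C)) := by
    change (1 : B) ∈ (RingHom.ker z).map f
    rw [htop]; trivial
  obtain ⟨n, b, c, h1⟩ := Submodule.mem_span_set'.1 h1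
  choose a ha hac using fun i ↦ (c i).2
  obtain ⟨E₀, hE₀, hE₀fg, haE⟩ := IsHopfSubalgebra.exists_fg_subset (k := k)
    (Finset.univ.image a)
  obtain ⟨E, _, _, i, hi, rfl⟩ := hE₀.exists_injective_range_eq
  obtain ⟨t, ht⟩ := hE₀fg
  obtain ⟨D₀, hD₀, hD₀fg, hD⟩ := IsHopfSubalgebra.exists_fg_subset (k := k)
    (t.image f ∪ Finset.univ.image b)
  obtain ⟨D, _, _, j, hj, rfl⟩ := hD₀.exists_injective_range_eq
  have : Algebra.FiniteType k E := by
    have : Algebra.FiniteType k (i : E →ₐ[k] C).range :=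
      (Subalgebra.fg_iff_finiteType _).1 ⟨t, ht⟩
    exact .equiv this (AlgEquiv.ofInjective (i : E →ₐ[k] C) hi).symm
  have : Algebra.FiniteType k D := by
    have : Algebra.FiniteType k (j : D →ₐ[k] B).range :=
      (Subalgebra.fg_iff_finiteType _).1 hD₀fg
    exact .equiv this (AlgEquiv.ofInjective (j : D →ₐ[k] B) hj).symm
  have hle : (i : E →ₐ[k] C).range ≤ (j : D →ₐ[k] B).range.comap (f : C →ₐ[k] B) := by
    rw [← ht]
    exact Algebra.adjoin_le fun x hx ↦
      hD _ (Finset.mem_union_left _ (Finset.mem_image_of_mem f hx))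
  obtain ⟨g, hg⟩ := BialgHom.exists_comp_eq_of_injective j hj (f.comp i)
    fun x ↦ hle ⟨x, rfl⟩
  have hginj : Function.Injective g := by
    refine .of_comp (f := j) ?_
    rw [show j ∘ g = f ∘ i from funext hg]
    exact hf.comp hi
  obtain ⟨y, hy⟩ := exists_comp_eq_of_finiteType g hginj (z.comp (i : E →ₐ[k] C))
  choose a' ha' using fun l ↦ haE (a l) (by simp)
  choose b' hb' using fun l ↦ hD (b l) (by simp)
  have hsum : ∑ l, b' l * g (a' l) = 1 := by
    apply hj
    rw [map_sum, map_one, ← h1]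
    refine Finset.sum_congr rfl fun l _ ↦ ?_
    rw [map_mul, hg, smul_eq_mul, ← hac]
    exact congr($(hb' l) * f $(ha' l))
  have := congrArg y hsum
  rw [map_sum, map_one, Finset.sum_eq_zero] at this
  · exact zero_ne_one this
  · intro l _
    have h2 : y (g (a' l)) = z (i (a' l)) := congr($hy (a' l))
    have h3 : i (a' l) = a l := ha' l
    rw [map_mul, h2, h3, (RingHom.mem_ker).1 (ha l), mul_zero]

lemma IsHopfSubalgebra.map_ker_ne_top {B : Type*} [CommRing B] [HopfAlgebra k B]
    {S : Subalgebra k B} (hS : IsHopfSubalgebra S) (z : S →ₐ[k] k) :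
    (RingHom.ker z).map S.val ≠ ⊤ := by
  obtain ⟨E, _, _, g, hg, rfl⟩ := hS.exists_injective_range_eq
  intro htop
  refine map_ker_ne_top_of_injective g hg (z.comp (g : E →ₐ[k] B).rangeRestrict) ?_
  rw [eq_top_iff, ← htop, Ideal.map_le_iff_le_comap]
  rintro ⟨_, e, rfl⟩ he
  exact Ideal.mem_map_of_mem g he

/-- A `k`-point of a subalgebra `C` extends to `C ⊔ T` for finitely generated `T`, provided that
the fibre over it is nonempty. -/
lemma exists_extension_sup {B : Type*} [CommRing B] [Algebra k B] {C T : Subalgebra k B}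
    (hT : T.FG) (z : C →ₐ[k] k) (h : (RingHom.ker z).map C.val ≠ ⊤) :
    ∃ y : ↥(C ⊔ T) →ₐ[k] k, ∀ c : C, y ⟨c, (le_sup_left : C ≤ C ⊔ T) c.2⟩ = z c := by
  let I := (RingHom.ker z).map C.val
  have : Nontrivial (B ⧸ I) := Ideal.Quotient.nontrivial_iff.2 h
  let π := Ideal.Quotient.mkₐ k I
  have hπ (c : C) : π c = algebraMap k _ (z c) := by
    rw [← sub_eq_zero, ← AlgHom.commutes π, ← map_sub]
    exact Ideal.Quotient.eq_zero_iff_mem.2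
      (Ideal.mem_map_of_mem C.val (x := c - algebraMap k C (z c)) (by simp [RingHom.mem_ker]))
  have hmap : (C ⊔ T).map π = T.map π := by
    rw [Algebra.map_sup, sup_eq_right]
    rintro _ ⟨c, hc, rfl⟩
    change π c ∈ _
    rw [hπ ⟨c, hc⟩]
    exact Subalgebra.algebraMap_mem _ _
  have : Algebra.FiniteType k ((C ⊔ T).map π) := by
    rw [hmap]
    exact (Subalgebra.fg_iff_finiteType _).1 (hT.map π)
  obtain ⟨u⟩ := nonempty_algHom_of_finiteType (k := k) ((C ⊔ T).map π)
  let ρ : ↥(C ⊔ T) →ₐ[k] ((C ⊔ T).map π) :=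
    (π.comp (C ⊔ T).val).codRestrict _ fun x ↦ ⟨x, x.2, rfl⟩
  refine ⟨u.comp ρ, fun c ↦ ?_⟩
  have : ρ ⟨c, (le_sup_left : C ≤ C ⊔ T) c.2⟩ = algebraMap k _ (z c) := Subtype.ext (hπ c)
  rw [AlgHom.comp_apply, this, AlgHom.commutes]
  rfl

/-- A Hopf subalgebra together with a `k`-point of it. -/
structure PartialPoint (k B : Type*) [Field k] [CommRing B] [HopfAlgebra k B] where
  /-- The domain of definition. -/
  carrier : Subalgebra k B
  isHopfSubalgebra : IsHopfSubalgebra carrier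
  /-- The point. -/
  point : carrier →ₐ[k] k

namespace PartialPoint

variable {k B : Type*} [Field k] [CommRing B] [HopfAlgebra k B]

instance : Preorder (PartialPoint k B) where
  le p q := ∃ h : p.carrier ≤ q.carrier, q.point.comp (Subalgebra.inclusion h) = p.point
  le_refl p := ⟨le_rfl, rfl⟩
  le_trans p q r := by
    rintro ⟨h, hpq⟩ ⟨h', hqr⟩
    refine ⟨h.trans h', ?_⟩
    rw [← hpq, ← hqr]
    rfl

lemma bddAbove_of_isChain {c : Set (PartialPoint k B)} (hc : IsChain (· ≤ ·) c)
    (hne : c.Nonempty) : BddAbove c := by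
  have : Nonempty c := hne.to_subtype
  have htot (p q : c) : p.1 ≤ q.1 ∨ q.1 ≤ p.1 := hc.total p.2 q.2
  have hdir : Directed (· ≤ ·) fun p : c ↦ p.1.carrier := fun p q ↦ by
    rcases htot p q with h | h
    · exact ⟨q, h.1, le_rfl⟩
    · exact ⟨p, le_rfl, h.1⟩
  have hcompat (p q : c) (h : p.1.carrier ≤ q.1.carrier) :
      p.1.point = q.1.point.comp (Subalgebra.inclusion h) := by
    rcases htot p q with h' | ⟨h₁, h₂⟩
    · exact h'.2.symm
    · ext x
      rw [← h₂]
      rfl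
  refine ⟨⟨_, .iSup fun p : c ↦ p.1.isHopfSubalgebra,
    Subalgebra.iSupLift (fun p : c ↦ p.1.carrier) hdir (fun p ↦ p.1.point) hcompat _ le_rfl⟩,
    fun p hp ↦ ⟨le_iSup (fun p : c ↦ p.1.carrier) ⟨p, hp⟩, AlgHom.ext fun x ↦ ?_⟩⟩
  exact Subalgebra.iSupLift_inclusion (fun p : c ↦ p.1.carrier) (dir := hdir)
    (f := fun p ↦ p.1.point) (hf := hcompat) (hT := le_rfl) (i := ⟨p, hp⟩) x
    (le_iSup (fun p : c ↦ p.1.carrier) ⟨p, hp⟩)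

lemma carrier_eq_top_of_isMax [IsAlgClosed k] {p : PartialPoint k B} (hp : IsMax p) :
    p.carrier = ⊤ := by
  rw [eq_top_iff]
  intro b _
  obtain ⟨T, hT, hTfg, hb⟩ := IsHopfSubalgebra.exists_fg_mem (k := k) b
  obtain ⟨y, hy⟩ :=
    exists_extension_sup hTfg p.point (p.isHopfSubalgebra.map_ker_ne_top p.point)
  let q : PartialPoint k B := ⟨p.carrier ⊔ T, p.isHopfSubalgebra.sup hT, y⟩
  have hpq : p ≤ q := ⟨le_sup_left, AlgHom.ext hy⟩
  exact (hp hpq).1 ((le_sup_right : T ≤ p.carrier ⊔ T) hb)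

end PartialPoint

end Extension

/-- An injective homomorphism of commutative Hopf algebras over an algebraically closed field
induces a surjection on `k`-points. -/
theorem exists_algHom_comp_eq_of_injective {k : Type*} [Field k] [IsAlgClosed k]
    {A B : Type*} [CommRing A] [CommRing B] [HopfAlgebra k A] [HopfAlgebra k B]
    (f : A →ₐc[k] B) (hf : Function.Injective f) (x : A →ₐ[k] k) :
    ∃ y : B →ₐ[k] k, y.comp (f : A →ₐ[k] B) = x := by
  let e := AlgEquiv.ofInjective (f : A →ₐ[k] B) hf
  let p₀ : PartialPoint k B := ⟨_, .range f, x.comp e.symm⟩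
  obtain ⟨p, hp₀, hp⟩ := zorn_le_nonempty_Ici₀ p₀
    (fun c _ hc q hq ↦ PartialPoint.bddAbove_of_isChain hc ⟨q, hq⟩) p₀ le_rfl
  have htop := PartialPoint.carrier_eq_top_of_isMax hp
  refine ⟨p.point.comp ((AlgHom.id k B).codRestrict _ fun b ↦ htop ▸ trivial),
    AlgHom.ext fun a ↦ ?_⟩
  have := congr($(hp₀.2) (e a))
  refine Eq.trans this ?_
  change x (e.symm (e a)) = x a
  rw [e.symm_apply_apply]

/-- Let `k` be an algebraically closed field, `A`, `B` commutative and
cocommutative Hopf algebras over `k`, and `f : A → B` a homomorphism of Hopf algebras such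
that `B` is faithfully flat as an `A`-module via `f`.  Then every `k`-algebra homomorphism
`x : A → k` extends along `f` to a `k`-algebra homomorphism `y : B → k` with `y ∘ f = x`. -/
theorem stmt_6 (k : Type*) [Field k] [IsAlgClosed k]
    (A B : Type*) [CommRing A] [CommRing B] [HopfAlgebra k A] [HopfAlgebra k B]
    (hA : (TensorProduct.comm k A A).toLinearMap ∘ₗ (Coalgebra.comul (R := k) (A := A))
        = (Coalgebra.comul : A →ₗ[k] A ⊗[k] A))
    (hB : (TensorProduct.comm k B B).toLinearMap ∘ₗ (Coalgebra.comul (R := k) (A := B))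
        = (Coalgebra.comul : B →ₗ[k] B ⊗[k] B))
    (f : A →ₐc[k] B)
    (hff : letI : Algebra A B := (f : A →+* B).toAlgebra
           Module.FaithfullyFlat A B)
    (x : A →ₐ[k] k) :
    ∃ y : B →ₐ[k] k, y.comp (f : A →ₐ[k] B) = x := by
  refine exists_algHom_comp_eq_of_injective f ?_ x
  let _ : Algebra A B := (f : A →+* B).toAlgebra
  have : Module.FaithfullyFlat A B := hff
  exact FaithfulSMul.algebraMap_injective A B
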